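/- (Consistency-around-a-face-centered-cube for the pair (A3_{(0)}, C3_{(1;0;0)}).) There exists a nonzero polynomial p in twelve variables with complex coefficients such that: for all nonzero α1,α2,β1,β2,γ1,γ2 ∈ ℂ and all x, xa, xb, xc, zn, zw ∈ ℂ with p(α1,α2,β1,β2,γ1,γ2,x,xa,xb,xc,zn,zw) ≠ 0, there exist xd, y, ya, yb, yc, yd, ze, zs ∈ ℂ satisfying all fourteen equations of the CAFCC system for the pair (A, C) := (A3_{(0)}, C3_{(1;0;0)}) with parameters (α1,α2),(β1,β2),(γ1,γ2). In other words, the overdetermined system of fourteen face-centered quad equations on the face-centered cube is consistent: generic initial data x, xa, xb, xc, zn, zw admits a completion solving all fourteen equations. -/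

import Mathlib

noncomputable section

open Matrix Complex

/-- The type-A face-centered quad polynomial `A3_{(δ)}`. -/
noncomputable def A3 (d x xa xb xc xd a1 a2 b1 b2 : ℂ) : ℂ :=
  d/4*(a1/a2-a2/a1)*(b1/b2-b2/b1)*(b1*b2/(a1*a2)-a1*a2/(b1*b2))*x
  + ((b1/b2-b2/b1)*(xa*xb-xc*xd) + (a1/a2-a2/a1)*(xa*xc-xb*xd)
      - (a1*a2/(b1*b2)-b1*b2/(a1*a2))*(xa*xd-xb*xc))*x
  + (a2/b1-b1/a2)*(xa*x^2-xb*xc*xd) - (a2/b2-b2/a2)*(xb*x^2-xa*xc*xd)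
  - (a1/b1-b1/a1)*(xc*x^2-xa*xb*xd) + (a1/b2-b2/a1)*(xd*x^2-xa*xb*xc)
  + d/4*((a1/b1-b1/a1)*(a2/b2-b2/a2)*((a1/b2-b2/a1)*xa+(a2/b1-b1/a2)*xd)
      - (a1/b2-b2/a1)*(a2/b1-b1/a2)*((a1/b1-b1/a1)*xb+(a2/b2-b2/a2)*xc))

/-- The type-C face-centered quad polynomial `C3_{(δ1;δ2;δ3)}`. -/
noncomputable def C3 (d1 d2 d3 x xa xb xc xd a1 a2 b1 b2 : ℂ) : ℂ :=
  (a2*(b1*xd-b2*xc) - d3*(a2^2*(b1*xb-b2*xa)+b1*b2*(b1*xa-b2*xb))/a1)*x^2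
  + a2*xa*xb*(b2*xd-b1*xc)
  + d1*a1*(b1*xb-b2*xa+a2^2*(xa/b2-xb/b1))
  + (a2^2*(xb*xc-xa*xd) + b1*b2*(xa*xc-xb*xd)
      + a2*(b2/b1-b1/b2)*(d1*a1 - d3*(b1*b2/a1)*xa*xb + d2*(b1*b2/a1)*xc*xd))*x
  + d2*((a2^2-b1^2)*(a2^2-b2^2)/(2*a2*b1*b2)*(b2*xd-b1*xc)
      + (xc*xd/a1)*(b1*b2*(b1*xb-b2*xa)+a2^2*(b1*xa-b2*xb)))

/-- The permutation matrix `P`. -/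
noncomputable def Pm : Matrix (Fin 2) (Fin 2) ℂ := !![0, 1; 1, 0]

/-- The matrix `M(u,v)` from the type-A Lax matrix of `A3_{(0)}`. -/
noncomputable def Mm (p1 p2 q1 q2 u v : ℂ) : Matrix (Fin 2) (Fin 2) ℂ :=
  (4:ℂ) • !![q1/p1-p1/q1, (p2/q1-q1/p2)*u+(q2/p2-p2/q2)*v; 0, q2/p1-p1/q2]

/-- The unnormalized type-A Lax matrix of `A3_{(0)}`. -/
noncomputable def NA3 (x xa xb p1 p2 q1 q2 : ℂ) : Matrix (Fin 2) (Fin 2) ℂ :=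
  x^2 • Mm p1 p2 q1 q2 xa xb
  + x • ((4:ℂ) • !![(p1/p2-p2/p1)*xa+(p1*p2/(q1*q2)-q1*q2/(p1*p2))*xb, (q1/q2-q2/q1)*xa*xb;
        q1/q2-q2/q1, (p1*p2/(q1*q2)-q1*q2/(p1*p2))*xa+(p1/p2-p2/p1)*xb])
  + (xa*xb) • (Pm * Mm p1 p2 q1 q2 (1/xa) (1/xb) * Pm)

/-- The normalization factor `D_LA` for the type-A Lax matrix of `A3_{(0)}`. -/
noncomputable def DA3 (x xa xb p1 p2 q1 q2 : ℂ) : ℂ :=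
  4*Complex.I*(p1^2-q1^2)*(q1*xa-p2*x)*(q2*x-p2*xb)/(p1*p2*q1*q2)

/-- The (normalized) type-A Lax matrix of `A3_{(0)}`. -/
noncomputable def laxA3 (x xa xb p1 p2 q1 q2 : ℂ) : Matrix (Fin 2) (Fin 2) ℂ :=
  (DA3 x xa xb p1 p2 q1 q2)⁻¹ • NA3 x xa xb p1 p2 q1 q2

/-- The type-C Lax matrix of `C3_{(δ1;δ2;δ3)}`. -/
noncomputable def laxC3 (d1 d2 d3 x xb xd p1 p2 q1 q2 : ℂ) : Matrix (Fin 2) (Fin 2) ℂ :=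
  p2 • (x^2 • (!![-q2, q1*xd; 0, 0]
        + d1 • ((2*d3*q1*q2/p1) • !![0, (q2/p2-p2/q2)*xb; 0, q1/p2-p2/q1]))
    + x • (!![p2*xb, -((q1*q2/p2)*xb*xd); -(q1*q2/p2), p2*xd]
        + d1 • (((2*q1*q2/p1)*(q2/q1-q1/q2)) • !![d2*xd, p1^2/(2*q1*q2); 0, d3*xb]))
    + (!![0, 0; q1*xb, -(q2*xb*xd)]
        + d1 • !![d2*q1*(q1/p2-p2/q1)*(p2/q2-q2/p2+2*(q2/p1)*xb*xd),
                   (q1/p2-p2/q1)*(p1*xb-d2*(p2/q2-q2/p2)*q2*xd);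
                   2*d2*(q2/p2-p2/q2)*(q1*q2/p1)*xd, p1*(q2/p2-p2/q2)]))

/-! ## Denominator-free versions of the face-centered quad polynomials -/

/-- Denominator-free version of `A3 0`. -/
def pA (x xa xb xc xd i j k l : ℂ) : ℂ :=
  ((k^2-l^2)*i*j*(xa*xb-xc*xd) + (i^2-j^2)*k*l*(xa*xc-xb*xd)
    - (i^2*j^2-k^2*l^2)*(xa*xd-xb*xc))*x
  + (j^2-k^2)*i*l*(xa*x^2-xb*xc*xd) - (j^2-l^2)*i*k*(xb*x^2-xa*xc*xd)
  - (i^2-k^2)*j*l*(xc*x^2-xa*xb*xd) + (i^2-l^2)*j*k*(xd*x^2-xa*xb*xc)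

/-- The coefficient of `xd` in `pA`. -/
def dA (x xa xb xc i j k l : ℂ) : ℂ :=
  -((k^2-l^2)*i*j*xc + (i^2-j^2)*k*l*xb + (i^2*j^2-k^2*l^2)*xa)*x
  - (j^2-k^2)*i*l*xb*xc + (j^2-l^2)*i*k*xa*xc + (i^2-k^2)*j*l*xa*xb + (i^2-l^2)*j*k*x^2

/-- The solution `xd` of `pA = 0`. -/
def sA (x xa xb xc i j k l : ℂ) : ℂ := -pA x xa xb xc 0 i j k l / dA x xa xb xc i j k l

/-- Denominator-free version of `C3 1 0 0`. -/
def pC (x xa xb xc xd a1 a2 b1 b2 : ℂ) : ℂ :=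
  b1*b2*a2*(b1*xd-b2*xc)*x^2 + b1*b2*a2*xa*xb*(b2*xd-b1*xc)
  + a1*(b1^2*b2*xb-b1*b2^2*xa+a2^2*(b1*xa-b2*xb))
  + (b1*b2*(a2^2*(xb*xc-xa*xd) + b1*b2*(xa*xc-xb*xd)) + a2*(b2^2-b1^2)*a1)*x

/-- The solution `Z2` of the equation at `X1` of a type-C octahedron. -/
def sC (X1 X2 X3 Z3 a p1 p2 p3 : ℂ) : ℂ :=
  (a + (p1*X1-p2*X2)*(p3*X1-p1*X3)*(X1*Z3*p2-a)*p3/(p2*((p2*X1-p1*X2)*(p1*X1-p3*X3))))/(p3*X1)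

theorem A3_of_pA {x xa xb xc xd i j k l : ℂ} (hi : i ≠ 0) (hj : j ≠ 0) (hk : k ≠ 0) (hl : l ≠ 0)
    (h : pA x xa xb xc xd i j k l = 0) : A3 0 x xa xb xc xd i j k l = 0 := by
  have e : A3 0 x xa xb xc xd i j k l = pA x xa xb xc xd i j k l / (i*j*k*l) := by
    unfold A3 pA
    field_simp
    ring
  rw [e, h, zero_div]

theorem C3_of_pC {x xa xb xc xd a1 a2 b1 b2 : ℂ} (hk : b1 ≠ 0) (hl : b2 ≠ 0)
    (h : pC x xa xb xc xd a1 a2 b1 b2 = 0) : C3 1 0 0 x xa xb xc xd a1 a2 b1 b2 = 0 := by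
  have e : C3 1 0 0 x xa xb xc xd a1 a2 b1 b2 = pC x xa xb xc xd a1 a2 b1 b2 / (b1*b2) := by
    unfold C3 pC
    simp only [zero_mul, zero_div, sub_zero, add_zero, one_mul]
    field_simp
  rw [e, h, zero_div]

theorem legsA (x xa xb xc xd i j k l : ℂ) : x * pA x xa xb xc xd i j k l =
    (j*x-k*xa)*(i*x-l*xd)*(l*x-j*xb)*(k*x-i*xc) - (k*x-j*xa)*(l*x-i*xd)*(j*x-l*xb)*(i*x-k*xc) := by
  unfold pA; ring

theorem legsC (x xa xb xc xd a1 a2 b1 b2 : ℂ) : x * pC x xa xb xc xd a1 a2 b1 b2 =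
    b1*((b1*x-a2*xa)*(a2*x-b2*xb)*(x*xd*b2-a1)) - b2*((a2*x-b1*xa)*(b2*x-a2*xb)*(x*xc*b1-a1)) := by
  unfold pC; ring

theorem pA_sA {x xa xb xc i j k l : ℂ} (h : dA x xa xb xc i j k l ≠ 0) :
    pA x xa xb xc (sA x xa xb xc i j k l) i j k l = 0 := by
  have e : ∀ t, pA x xa xb xc t i j k l
      = dA x xa xb xc i j k l * t + pA x xa xb xc 0 i j k l := by
    intro t; unfold pA dA; ring
  rw [e, sA]; field_simp; ring

/-! ## The octahedra -/

/-- Type-A octahedron: the equations at `v12`, `v13` imply the one at `v14`. -/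
theorem starA {p1 p2 p3 p4 v12 v13 v14 v23 v24 v34 : ℂ}
    (h12 : pA v12 v13 v14 v23 v24 p1 p2 p3 p4 = 0)
    (h13 : pA v13 v12 v14 v23 v34 p1 p3 p2 p4 = 0)
    (hd : dA v13 v12 v14 v23 p1 p3 p2 p4 ≠ 0) :
    pA v14 v12 v13 v24 v34 p1 p4 p2 p3 = 0 := by
  have key : dA v13 v12 v14 v23 p1 p3 p2 p4 * pA v14 v12 v13 v24 v34 p1 p4 p2 p3
      = dA v14 v12 v13 v24 p1 p4 p2 p3 * pA v13 v12 v14 v23 v34 p1 p3 p2 p4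
        + (p1^2-p2^2)*(p3*v13-p4*v14)*(p4*v13-p3*v14) * pA v12 v13 v14 v23 v24 p1 p2 p3 p4 := by
    unfold pA dA; ring
  rw [h12, h13, mul_zero, mul_zero] at key
  simpa [hd] using key

/-- Type-A octahedron: the equations at `v12`, `v13` imply the one at `v23`. -/
theorem triA {p1 p2 p3 p4 v12 v13 v14 v23 v24 v34 : ℂ}
    (h12 : pA v12 v13 v14 v23 v24 p1 p2 p3 p4 = 0)
    (h13 : pA v13 v12 v14 v23 v34 p1 p3 p2 p4 = 0)
    (hd : dA v13 v12 v14 v23 p1 p3 p2 p4 ≠ 0) :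
    pA v23 v12 v24 v13 v34 p2 p3 p1 p4 = 0 := by
  have e1 : pA v12 v13 v23 v14 v24 p4 p3 p2 p1 = 0 := by
    rw [← neg_eq_zero, ← h12]; unfold pA; ring
  have e2 : pA v13 v12 v23 v14 v34 p4 p2 p3 p1 = 0 := by
    rw [← neg_eq_zero, ← h13]; unfold pA; ring
  have e3 : dA v13 v12 v23 v14 p4 p2 p3 p1 ≠ 0 := by
    rw [← neg_ne_zero]; convert hd using 1; unfold dA; ring
  have := starA e1 e2 e3
  rw [← neg_eq_zero, ← this]; unfold pA; ring

/-- Type-A octahedron: the equations at `v12`, `v13` imply all the others. -/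
theorem octA {p1 p2 p3 p4 v12 v13 v14 v23 v24 v34 : ℂ}
    (h12 : pA v12 v13 v14 v23 v24 p1 p2 p3 p4 = 0)
    (h13 : pA v13 v12 v14 v23 v34 p1 p3 p2 p4 = 0)
    (hd : dA v13 v12 v14 v23 p1 p3 p2 p4 ≠ 0)
    (hd2 : dA v12 v14 v13 v24 p1 p2 p4 p3 ≠ 0)
    (hd3 : dA v13 v14 v12 v34 p1 p3 p4 p2 ≠ 0) :
    pA v14 v12 v13 v24 v34 p1 p4 p2 p3 = 0 ∧
    pA v23 v12 v24 v13 v34 p2 p3 p1 p4 = 0 ∧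
    pA v24 v12 v23 v14 v34 p2 p4 p1 p3 = 0 ∧
    pA v34 v13 v23 v14 v24 p3 p4 p1 p2 = 0 := by
  have h14 := starA h12 h13 hd
  have h23 := triA h12 h13 hd
  have h12' : pA v12 v14 v13 v24 v23 p1 p2 p4 p3 = 0 := by
    rw [← neg_eq_zero, ← h12]; unfold pA; ring
  have h13' : pA v13 v14 v12 v34 v23 p1 p3 p4 p2 = 0 := by
    rw [← neg_eq_zero, ← h13]; unfold pA; ring
  have h14' : pA v14 v13 v12 v34 v24 p1 p4 p3 p2 = 0 := by
    rw [← neg_eq_zero, ← h14]; unfold pA; ring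
  have h24 := triA h14 h12' hd2
  have h34 := triA h14' h13' hd3
  refine ⟨h14, h23, ?_, ?_⟩
  · rw [← neg_eq_zero, ← h24]; unfold pA; ring
  · rw [← neg_eq_zero, ← h34]; unfold pA; ring

theorem pC_symm {x xa xb xc xd a1 a2 b1 b2 : ℂ} (h : pC x xa xb xc xd a1 a2 b1 b2 = 0) :
    pC x xb xa xd xc a1 a2 b2 b1 = 0 := by
  rw [← neg_eq_zero, ← h]; unfold pC; ring

theorem pC_sC {X1 X2 X3 Z3 a p1 p2 p3 : ℂ} (h2 : p2 ≠ 0) (h3 : p3 ≠ 0) (hX : X1 ≠ 0)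
    (l1 : p2*X1-p1*X2 ≠ 0) (l2 : p1*X1-p3*X3 ≠ 0) :
    pC X1 X3 X2 (sC X1 X2 X3 Z3 a p1 p2 p3) Z3 a p1 p3 p2 = 0 := by
  have e : X1 * sC X1 X2 X3 Z3 a p1 p2 p3 * p3 - a
     = (p1*X1-p2*X2)*(p3*X1-p1*X3)*(X1*Z3*p2-a)*p3/(p2*((p2*X1-p1*X2)*(p1*X1-p3*X3))) := by
    unfold sC
    generalize (p1*X1-p2*X2)*(p3*X1-p1*X3)*(X1*Z3*p2-a)*p3/
      (p2*((p2*X1-p1*X2)*(p1*X1-p3*X3))) = t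
    field_simp; ring
  have := legsC X1 X3 X2 (sC X1 X2 X3 Z3 a p1 p2 p3) Z3 a p1 p3 p2
  rw [e] at this
  apply (mul_eq_zero.mp (this.trans ?_)).resolve_left hX
  generalize p2*X1-p1*X2 = s at *
  generalize p1*X1-p3*X3 = t at *
  field_simp; ring

theorem starC {X1 X2 X3 Z1 Z2 Z3 a p1 p2 p3 : ℂ}
    (h1 : pC X1 X3 X2 Z2 Z3 a p1 p3 p2 = 0) (h2 : pC X2 X3 X1 Z1 Z3 a p2 p3 p1 = 0)
    (n1 : p1 ≠ 0) (n3 : p3 ≠ 0)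
    (l1 : p2*X1-p1*X2 ≠ 0) (l2 : p2*X2-p3*X3 ≠ 0) :
    pC X3 X2 X1 Z1 Z2 a p3 p2 p1 = 0 ∧ pC Z3 Z2 Z1 X1 X2 a p3 p2 p1 = 0 := by
  have hd : (p2*X1-p1*X2)*(p2*X2-p3*X3)*p1*p3 ≠ 0 := by simp [*]
  constructor
  · have key : (p2*X1-p1*X2)*(p2*X2-p3*X3)*p1*p3 * pC X3 X2 X1 Z1 Z2 a p3 p2 p1
      = -((p2*X2-p3*X3)*(p3*X1-p1*X3)*p1*p2) * pC X2 X3 X1 Z1 Z3 a p2 p3 p1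
        - (p2*X2-p3*X3)*(p3*X2-p2*X3)*p1^2 * pC X1 X3 X2 Z2 Z3 a p1 p3 p2 := by
      unfold pC; ring
    rw [h1, h2, mul_zero, mul_zero] at key
    simpa [hd] using key
  · have key : (p2*X1-p1*X2)*(p2*X2-p3*X3)*p1*p3 * pC Z3 Z2 Z1 X1 X2 a p3 p2 p1
      = p1*(-X1*Z2*p2^2*p3+X1*Z3*p2*p3^2+X2*Z2*p1*p2*p3-X2*Z3*p1*p2^2+a*p2^2-a*p3^2)
          * pC X2 X3 X1 Z1 Z3 a p2 p3 p1
        + (p2^2-p3^2)*p1*(a-X2*Z3*p1) * pC X1 X3 X2 Z2 Z3 a p1 p3 p2 := by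
      unfold pC; ring
    rw [h1, h2, mul_zero, mul_zero] at key
    simpa [hd] using key

/-- Type-C octahedron: the equations at `X1`, `X2` imply all the others. -/
theorem octC {X1 X2 X3 Z1 Z2 Z3 a p1 p2 p3 : ℂ}
    (h1 : pC X1 X3 X2 Z2 Z3 a p1 p3 p2 = 0) (h2 : pC X2 X3 X1 Z1 Z3 a p2 p3 p1 = 0)
    (n1 : p1 ≠ 0) (n2 : p2 ≠ 0) (n3 : p3 ≠ 0)
    (l1 : p2*X1-p1*X2 ≠ 0) (l2 : p2*X2-p3*X3 ≠ 0) (l3 : p3*X2-p2*X3 ≠ 0)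
    (l4 : p1*X1-p3*X3 ≠ 0) (l5 : p3*X1-p1*X3 ≠ 0) :
    pC X3 X2 X1 Z1 Z2 a p3 p2 p1 = 0 ∧ pC Z3 Z2 Z1 X1 X2 a p3 p2 p1 = 0 ∧
    pC Z1 Z3 Z2 X2 X3 a p1 p3 p2 = 0 ∧ pC Z2 Z3 Z1 X1 X3 a p2 p3 p1 = 0 := by
  obtain ⟨h3, k3⟩ := starC h1 h2 n1 n3 l1 l2
  have l4' : p3*X3-p1*X1 ≠ 0 := by rw [← neg_ne_zero, neg_sub]; exact l4
  have l2' : p3*X3-p2*X2 ≠ 0 := by rw [← neg_ne_zero, neg_sub]; exact l2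
  have k1 := (starC (pC_symm h2) (pC_symm h3) n2 n1 l3 l4').2
  have k2 := (starC (pC_symm h1) h3 n1 n2 l5 l2').2
  exact ⟨h3, k3, k1, k2⟩

theorem pA_swap12 {x xa xb xc xd i j k l : ℂ} (h : pA x xa xb xc xd i j k l = 0) :
    pA x xc xd xa xb j i k l = 0 := by
  rw [← neg_eq_zero, ← h]; unfold pA; ring

theorem pA_swap34 {x xa xb xc xd i j k l : ℂ} (h : pA x xa xb xc xd i j k l = 0) :
    pA x xb xa xd xc i j l k = 0 := by
  rw [← neg_eq_zero, ← h]; unfold pA; ring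

/-! ## Face equations from pairs of octahedra -/

theorem combAA {w x y u1 v1 u2 v2 p q r s1 s2 : ℂ} (hw : w ≠ 0)
    (h1 : pA w x u1 y v1 p q r s1 = 0) (h2 : pA w x u2 y v2 p q r s2 = 0)
    (l1 : q*w-r*x ≠ 0) (l2 : r*w-p*y ≠ 0) : pA w v1 v2 u1 u2 q p s1 s2 = 0 := by
  have e1 := legsA w x u1 y v1 p q r s1
  have e2 := legsA w x u2 y v2 p q r s2
  rw [h1, mul_zero] at e1
  rw [h2, mul_zero] at e2
  apply (mul_eq_zero.mp ((legsA w v1 v2 u1 u2 q p s1 s2).trans ?_)).resolve_left hw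
  apply mul_left_cancel₀ (mul_ne_zero l1 l2)
  linear_combination -(s2*w-p*v2)*(q*w-s2*u2) * e1 + (s1*w-p*v1)*(q*w-s1*u1) * e2

theorem combCC {w x y u1 v1 u2 v2 a p q s1 s2 : ℂ} (hw : w ≠ 0) (hp : p ≠ 0)
    (h1 : pC w u1 v1 x y a s1 p q = 0) (h2 : pC w u2 v2 x y a s2 p q = 0)
    (l1 : w*y*q-a ≠ 0) : pA w v1 v2 u1 u2 p q s1 s2 = 0 := by
  have e1 := legsC w u1 v1 x y a s1 p q
  have e2 := legsC w u2 v2 x y a s2 p q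
  rw [h1, mul_zero] at e1
  rw [h2, mul_zero] at e2
  apply (mul_eq_zero.mp ((legsA w v1 v2 u1 u2 p q s1 s2).trans ?_)).resolve_left hw
  apply mul_left_cancel₀ (mul_ne_zero hp l1)
  linear_combination (s2*w-p*u2)*(q*w-s2*v2) * e1 - (s1*w-p*u1)*(q*w-s1*v1) * e2

theorem combAC {w x y u v c d a r s p q : ℂ} (hw : w ≠ 0)
    (h1 : pA w x y u v r s p q = 0) (h2 : pC w y x d c a s q p = 0)
    (l1 : s*w-p*x ≠ 0) (l2 : q*w-s*y ≠ 0) : pC w v u d c a r q p = 0 := by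
  have e1 := legsA w x y u v r s p q
  have e2 := legsC w y x d c a s q p
  rw [h1, mul_zero] at e1
  rw [h2, mul_zero] at e2
  apply (mul_eq_zero.mp ((legsC w v u d c a r q p).trans ?_)).resolve_left hw
  apply mul_left_cancel₀ (mul_ne_zero l1 l2)
  linear_combination (p*(w*d*q-a)) * e1 - ((q*w-r*v)*(r*w-p*u)) * e2

theorem combX {w u1 zn z1 y zs c1 u2 z2 c2 a p r s1 s2 q : ℂ} (hw : w ≠ 0) (hq : q ≠ 0)
    (h1 : pA w u1 zn z1 y p r s1 q = 0) (k1 : pC w y z1 zs c1 a p q s1 = 0)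
    (h2 : pA w u2 zn z2 y p r s2 q = 0) (k2 : pC w y z2 zs c2 a p q s2 = 0)
    (l : p*w-q*y ≠ 0) (l1 : s1*w-p*z1 ≠ 0) (l2 : s2*w-p*z2 ≠ 0) (lz : q*w-r*zn ≠ 0) :
    pC w u1 u2 c1 c2 a r s1 s2 = 0 := by
  have main : ∀ {u z c s : ℂ}, pA w u zn z y p r s q = 0 → pC w y z zs c a p q s = 0 →
      s*w-p*z ≠ 0 →
      q*(q*w-r*zn)*(r*w-s*u)*(w*c*s-a) = s*(s*w-r*u)*(r*w-q*zn)*(w*zs*q-a) := by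
    intro u z c s h k l1
    have e1 := legsA w u zn z y p r s q
    have e2 := legsC w y z zs c a p q s
    rw [h, mul_zero] at e1
    rw [k, mul_zero] at e2
    apply mul_left_cancel₀ (mul_ne_zero l l1)
    linear_combination (-(q*(w*c*s-a))) * e1 - ((s*w-r*u)*(r*w-q*zn)) * e2
  have m1 := main h1 k1 l1
  have m2 := main h2 k2 l2
  apply (mul_eq_zero.mp ((legsC w u1 u2 c1 c2 a r s1 s2).trans ?_)).resolve_left hw
  apply mul_left_cancel₀ (mul_ne_zero hq lz)
  linear_combination (-(s2*(s2*w-r*u2))) * m1 + (s1*(s1*w-r*u1)) * m2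

theorem sub_swap_ne {a b : ℂ} (h : a - b ≠ 0) : b - a ≠ 0 := by
  rw [← neg_ne_zero, neg_sub]; exact h

/-- The algebraic core of the consistency theorem. -/
theorem core {a1 a2 b1 b2 g1 g2 x xa xb xc xd y ya yb yc yd zn ze zs zw : ℂ}
    (ha2 : a2 ≠ 0) (hb1 : b1 ≠ 0) (hb2 : b2 ≠ 0) (hg1 : g1 ≠ 0) (hg2 : g2 ≠ 0)
    (hx : x ≠ 0) (hy : y ≠ 0) (hzw : zw ≠ 0) (hze : ze ≠ 0) (hzn : zn ≠ 0) (hzs : zs ≠ 0)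
    -- the defining equations of the unknowns
    (t1 : pA x xa zn zw y g2 a2 b1 g1 = 0) (t2 : pA xa x zn zw ya g2 b1 a2 g1 = 0)
    (t3 : pA x y ze zn xb a2 g2 g1 b2 = 0) (t4 : pA y x ze zn yb a2 g1 g2 b2 = 0)
    (t5 : pC x y zw zs xc a1 g2 g1 b1 = 0) (t6 : pC zw y x yc xc a1 b1 g1 g2 = 0)
    (t7 : pC x ze y xd zs a1 g2 b2 g1 = 0) (t8 : pC y ze x yd zs a1 g1 b2 g2 = 0)
    -- nondegeneracy
    (d1 : dA xa x zn zw g2 b1 a2 g1 ≠ 0) (d2 : dA x zn xa y g2 a2 g1 b1 ≠ 0)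
    (d3 : dA xa zn x ya g2 b1 g1 a2 ≠ 0)
    (d4 : dA y x ze zn a2 g1 g2 b2 ≠ 0) (d5 : dA x ze y xb a2 g2 b2 g1 ≠ 0)
    (d6 : dA y ze x yb a2 g1 b2 g2 ≠ 0)
    (m1 : g2*x-g1*y ≠ 0) (m2 : g1*x-g2*y ≠ 0)
    (m3 : g2*x-b1*zw ≠ 0) (m4 : b1*x-g2*zw ≠ 0)
    (m5 : g1*y-b1*zw ≠ 0) (m6 : b1*y-g1*zw ≠ 0)
    (m7 : g2*x-b2*ze ≠ 0) (m8 : b2*x-g2*ze ≠ 0)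
    (m9 : g1*y-b2*ze ≠ 0) (m10 : b2*y-g1*ze ≠ 0)
    (m11 : g1*zn-a2*x ≠ 0) (m12 : a2*zn-g2*y ≠ 0)
    (m13 : g1*x-a2*zn ≠ 0) (m14 : g2*y-a2*zn ≠ 0) (m15 : zs*y*g2-a1 ≠ 0) :
    C3 1 0 0 x xa xb xc xd a1 a2 b1 b2 = 0 ∧
        C3 1 0 0 zw ya xa yc xc a1 a2 g1 g2 = 0 ∧
        A3 0 zn ya yb xa xb g1 g2 b1 b2 = 0 ∧
        C3 1 0 0 y ya yb yc yd a1 a2 b1 b2 = 0 ∧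
        C3 1 0 0 ze yb xb yd xd a1 a2 g1 g2 = 0 ∧
        A3 0 zs yc yd xc xd g1 g2 b1 b2 = 0 ∧
        A3 0 xa zw ya x zn b1 g2 a2 g1 = 0 ∧
        A3 0 xb ze yb x zn b2 g2 a2 g1 = 0 ∧
        C3 1 0 0 xc zs yc x zw a1 g1 b1 g2 = 0 ∧
        C3 1 0 0 xd yd zs ze x a1 g1 g2 b2 = 0 ∧
        A3 0 ya zw xa y zn b1 g1 a2 g2 = 0 ∧
        A3 0 yb ze xb y zn b2 g1 a2 g2 = 0 ∧
        C3 1 0 0 yc xc zs zw y a1 g2 g1 b1 = 0 ∧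
        C3 1 0 0 yd xd zs ze y a1 g2 g1 b2 = 0 := by
  obtain ⟨Azn, Azw, Ay, Aya⟩ := octA t1 t2 d1 d2 d3
  obtain ⟨Bze, Bzn, Bxb, Byb⟩ := octA t3 t4 d4 d5 d6
  obtain ⟨Cy, Cxc, Cyc, Czs⟩ := octC t5 t6 hg2 hb1 hg1 m4
    (sub_swap_ne m5) (sub_swap_ne m6) m1 m2
  obtain ⟨Dze, Dzs, Dyd, Dxd⟩ := octC t7 t8 hg2 hg1 hb2 m2 m9 m10 m7 m8
  refine ⟨C3_of_pC hb1 hb2 ?_, C3_of_pC hg1 hg2 ?_, A3_of_pA hg1 hg2 hb1 hb2 ?_,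
    C3_of_pC hb1 hb2 ?_, C3_of_pC hg1 hg2 ?_, A3_of_pA hg1 hg2 hb1 hb2 ?_,
    A3_of_pA hb1 hg2 ha2 hg1 ?_, A3_of_pA hb2 hg2 ha2 hg1 ?_,
    C3_of_pC hb1 hg2 ?_, C3_of_pC hg2 hb2 ?_,
    A3_of_pA hb1 hg1 ha2 hg2 ?_, A3_of_pA hb2 hg1 ha2 hg2 ?_,
    C3_of_pC hg1 hb1 ?_, C3_of_pC hg1 hb2 ?_⟩
  · exact combX hx hg1 t1 t5 (pA_swap34 (pA_swap12 t3)) (pC_symm t7) m1 m4 m8 m13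
  · exact combAC hzw Azw t6 (sub_swap_ne m3) (sub_swap_ne m6)
  · exact combAA hzn Azn Bzn m11 m12
  · exact combX hy hg2 (pA_swap34 (pA_swap12 Ay)) (pC_symm Cy)
      (pA_swap34 (pA_swap12 t4)) (pC_symm t8) (sub_swap_ne m1) m6 m10 m14
  · exact combAC hze Bze Dze (sub_swap_ne m7) (sub_swap_ne m10)
  · exact combCC hzs hg1 Czs Dzs m15
  · exact pA_swap12 t2
  · exact pA_swap12 Bxb
  · exact Cxc
  · exact pC_symm Dxd
  · exact pA_swap34 Aya
  · exact pA_swap12 Byb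
  · exact Cyc
  · exact pC_symm Dyd

/-! ## Zariski-generic properties near a point -/

/-- `f` agrees with a rational function, regular at `v0`, wherever its denominator is nonzero. -/
def Reg (v0 : Fin 12 → ℂ) (f : (Fin 12 → ℂ) → ℂ) : Prop :=
  ∃ n d : MvPolynomial (Fin 12) ℂ, MvPolynomial.eval v0 d ≠ 0 ∧
    ∀ v, MvPolynomial.eval v d ≠ 0 → f v * MvPolynomial.eval v d = MvPolynomial.eval v n

/-- `P` holds on a Zariski-open neighbourhood of `v0`. -/
def Gen (v0 : Fin 12 → ℂ) (P : (Fin 12 → ℂ) → Prop) : Prop :=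
  ∃ p : MvPolynomial (Fin 12) ℂ, MvPolynomial.eval v0 p ≠ 0 ∧
    ∀ v, MvPolynomial.eval v p ≠ 0 → P v

namespace Reg
variable {v0 : Fin 12 → ℂ} {f g : (Fin 12 → ℂ) → ℂ}

theorem const (c : ℂ) : Reg v0 (fun _ => c) := ⟨MvPolynomial.C c, 1, by simp, by simp⟩

theorem coord (i : Fin 12) : Reg v0 (fun v => v i) := ⟨MvPolynomial.X i, 1, by simp, by simp⟩

theorem add (hf : Reg v0 f) (hg : Reg v0 g) : Reg v0 (fun v => f v + g v) := by
  obtain ⟨n, d, h0, h⟩ := hf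
  obtain ⟨m, e, k0, k⟩ := hg
  refine ⟨n*e + m*d, d*e, by simp [h0, k0], fun v hv => ?_⟩
  simp only [map_mul, map_add] at hv ⊢
  rw [← h v (left_ne_zero_of_mul hv), ← k v (right_ne_zero_of_mul hv)]; ring

theorem mul (hf : Reg v0 f) (hg : Reg v0 g) : Reg v0 (fun v => f v * g v) := by
  obtain ⟨n, d, h0, h⟩ := hf
  obtain ⟨m, e, k0, k⟩ := hg
  refine ⟨n*m, d*e, by simp [h0, k0], fun v hv => ?_⟩
  simp only [map_mul] at hv ⊢
  rw [← h v (left_ne_zero_of_mul hv), ← k v (right_ne_zero_of_mul hv)]; ring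

theorem neg (hf : Reg v0 f) : Reg v0 (fun v => -f v) := by
  obtain ⟨n, d, h0, h⟩ := hf
  refine ⟨-n, d, h0, fun v hv => ?_⟩
  rw [map_neg, ← h v hv]; ring

theorem sub (hf : Reg v0 f) (hg : Reg v0 g) : Reg v0 (fun v => f v - g v) := by
  simpa only [sub_eq_add_neg] using hf.add hg.neg

theorem sq (hf : Reg v0 f) : Reg v0 (fun v => f v ^ 2) := by
  simpa only [pow_two] using hf.mul hf

theorem inv (hf : Reg v0 f) (h1 : f v0 ≠ 0) : Reg v0 (fun v => (f v)⁻¹) := by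
  obtain ⟨n, d, h0, h⟩ := hf
  have hn : MvPolynomial.eval v0 n ≠ 0 := by rw [← h v0 h0]; exact mul_ne_zero h1 h0
  refine ⟨d*d, d*n, by simp [h0, hn], fun v hv => ?_⟩
  simp only [map_mul] at hv ⊢
  have hd := left_ne_zero_of_mul hv
  have hn' := right_ne_zero_of_mul hv
  rw [← h v hd] at hn' ⊢
  have hf := left_ne_zero_of_mul hn'
  field_simp

theorem div (hf : Reg v0 f) (hg : Reg v0 g) (h1 : g v0 ≠ 0) : Reg v0 (fun v => f v / g v) := by
  simpa only [div_eq_mul_inv] using hf.mul (hg.inv h1)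

theorem ne (hf : Reg v0 f) (h1 : f v0 ≠ 0) : Gen v0 (fun v => f v ≠ 0) := by
  obtain ⟨n, d, h0, h⟩ := hf
  have hn : MvPolynomial.eval v0 n ≠ 0 := by rw [← h v0 h0]; exact mul_ne_zero h1 h0
  refine ⟨d*n, by simp [h0, hn], fun v hv => ?_⟩
  simp only [map_mul] at hv
  have hn' := right_ne_zero_of_mul hv
  rw [← h v (left_ne_zero_of_mul hv)] at hn'
  exact left_ne_zero_of_mul hn'

theorem pA {x xa xb xc xd i j k l : (Fin 12 → ℂ) → ℂ} (hx : Reg v0 x) (hxa : Reg v0 xa)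
    (hxb : Reg v0 xb) (hxc : Reg v0 xc) (hxd : Reg v0 xd) (hi : Reg v0 i) (hj : Reg v0 j)
    (hk : Reg v0 k) (hl : Reg v0 l) :
    Reg v0 (fun v => _root_.pA (x v) (xa v) (xb v) (xc v) (xd v) (i v) (j v) (k v) (l v)) := by
  unfold _root_.pA
  repeat' first
    | with_reducible assumption | with_reducible apply Reg.sq | with_reducible apply Reg.add | with_reducible apply Reg.sub | with_reducible apply Reg.mul

theorem dA {x xa xb xc i j k l : (Fin 12 → ℂ) → ℂ} (hx : Reg v0 x) (hxa : Reg v0 xa)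
    (hxb : Reg v0 xb) (hxc : Reg v0 xc) (hi : Reg v0 i) (hj : Reg v0 j)
    (hk : Reg v0 k) (hl : Reg v0 l) :
    Reg v0 (fun v => _root_.dA (x v) (xa v) (xb v) (xc v) (i v) (j v) (k v) (l v)) := by
  unfold _root_.dA
  repeat' first
    | with_reducible assumption | with_reducible apply Reg.sq | with_reducible apply Reg.add | with_reducible apply Reg.sub | with_reducible apply Reg.mul | with_reducible apply Reg.neg

theorem sA {x xa xb xc i j k l : (Fin 12 → ℂ) → ℂ} (hx : Reg v0 x) (hxa : Reg v0 xa)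
    (hxb : Reg v0 xb) (hxc : Reg v0 xc) (hi : Reg v0 i) (hj : Reg v0 j)
    (hk : Reg v0 k) (hl : Reg v0 l)
    (h : _root_.dA (x v0) (xa v0) (xb v0) (xc v0) (i v0) (j v0) (k v0) (l v0) ≠ 0) :
    Reg v0 (fun v => _root_.sA (x v) (xa v) (xb v) (xc v) (i v) (j v) (k v) (l v)) := by
  unfold _root_.sA
  exact Reg.div (Reg.neg (Reg.pA hx hxa hxb hxc (Reg.const 0) hi hj hk hl))
    (Reg.dA hx hxa hxb hxc hi hj hk hl) h

theorem sC {X1 X2 X3 Z3 a p1 p2 p3 : (Fin 12 → ℂ) → ℂ} (hX1 : Reg v0 X1) (hX2 : Reg v0 X2)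
    (hX3 : Reg v0 X3) (hZ3 : Reg v0 Z3) (ha : Reg v0 a) (hp1 : Reg v0 p1)
    (hp2 : Reg v0 p2) (hp3 : Reg v0 p3)
    (h : p2 v0*((p2 v0*X1 v0-p1 v0*X2 v0)*(p1 v0*X1 v0-p3 v0*X3 v0)) ≠ 0)
    (h' : p3 v0 * X1 v0 ≠ 0) :
    Reg v0 (fun v => _root_.sC (X1 v) (X2 v) (X3 v) (Z3 v) (a v) (p1 v) (p2 v) (p3 v)) := by
  unfold _root_.sC
  apply Reg.div _ _ h'
  · apply Reg.add ha
    apply Reg.div _ _ h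
    all_goals repeat' first
      | with_reducible assumption | with_reducible apply Reg.sq | with_reducible apply Reg.add | with_reducible apply Reg.sub | with_reducible apply Reg.mul
  · exact Reg.mul hp3 hX1

end Reg

theorem Gen.and {v0 : Fin 12 → ℂ} {P Q : (Fin 12 → ℂ) → Prop} (hP : Gen v0 P) (hQ : Gen v0 Q) :
    Gen v0 (fun v => P v ∧ Q v) := by
  obtain ⟨p, p0, hp⟩ := hP
  obtain ⟨q, q0, hq⟩ := hQ
  refine ⟨p*q, by simp [p0, q0], fun v hv => ?_⟩
  rw [map_mul] at hv
  exact ⟨hp v (left_ne_zero_of_mul hv), hq v (right_ne_zero_of_mul hv)⟩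

/-! ## The solution and the base point
The coordinates are `a1, a2, b1, b2, g1, g2, x, xa, xb, xc, zn, zw`, in this order. -/

/-- The base point. -/
def base : Fin 12 → ℂ := ![-3, -3, -1, -2, 2, 4, 1, -2, 4, 4, -1, -2]

theorem base_vals : base 0 = -3 ∧ base 1 = -3 ∧ base 2 = -1 ∧ base 3 = -2 ∧ base 4 = 2 ∧
    base 5 = 4 ∧ base 6 = 1 ∧ base 7 = -2 ∧ base 8 = 4 ∧ base 9 = 4 ∧ base 10 = -1 ∧
    base 11 = -2 := ⟨rfl, rfl, rfl, rfl, rfl, rfl, rfl, rfl, rfl, rfl, rfl, rfl⟩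

def fy (v : Fin 12 → ℂ) : ℂ := sA (v 6) (v 7) (v 10) (v 11) (v 5) (v 1) (v 2) (v 4)
def fya (v : Fin 12 → ℂ) : ℂ := sA (v 7) (v 6) (v 10) (v 11) (v 5) (v 2) (v 1) (v 4)
def fze (v : Fin 12 → ℂ) : ℂ := sA (v 6) (v 10) (v 8) (fy v) (v 5) (v 1) (v 4) (v 3)
def fyb (v : Fin 12 → ℂ) : ℂ := sA (fy v) (v 6) (fze v) (v 10) (v 1) (v 4) (v 5) (v 3)
def fzs (v : Fin 12 → ℂ) : ℂ := sC (v 6) (v 11) (fy v) (v 9) (v 0) (v 5) (v 2) (v 4)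

theorem fy_base : fy base = 8 := by
  obtain ⟨h0, h1, h2, h3, h4, h5, h6, h7, h8, h9, h10, h11⟩ := base_vals
  simp only [fy, sA, pA, dA, *]; norm_num
theorem fya_base : fya base = 44/31 := by
  obtain ⟨h0, h1, h2, h3, h4, h5, h6, h7, h8, h9, h10, h11⟩ := base_vals
  simp only [fya, sA, pA, dA, *]; norm_num
theorem fze_base : fze base = -11/7 := by
  obtain ⟨h0, h1, h2, h3, h4, h5, h6, h7, h8, h9, h10, h11⟩ := base_vals
  simp only [fze, sA, pA, dA, fy_base, *]; norm_num
theorem fyb_base : fyb base = 26/23 := by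
  obtain ⟨h0, h1, h2, h3, h4, h5, h6, h7, h8, h9, h10, h11⟩ := base_vals
  simp only [fyb, sA, pA, dA, fy_base, fze_base, *]; norm_num
theorem fzs_base : fzs base = -11/14 := by
  obtain ⟨h0, h1, h2, h3, h4, h5, h6, h7, h8, h9, h10, h11⟩ := base_vals
  simp only [fzs, sC, fy_base, *]; norm_num

theorem reg_fy : Reg base fy := by
  unfold fy
  apply Reg.sA <;> try apply Reg.coord
  obtain ⟨h0, h1, h2, h3, h4, h5, h6, h7, h8, h9, h10, h11⟩ := base_vals
  simp only [dA, *]; norm_num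
theorem reg_fya : Reg base fya := by
  unfold fya
  apply Reg.sA <;> try apply Reg.coord
  obtain ⟨h0, h1, h2, h3, h4, h5, h6, h7, h8, h9, h10, h11⟩ := base_vals
  simp only [dA, *]; norm_num
theorem reg_fze : Reg base fze := by
  unfold fze
  apply Reg.sA <;> first | exact reg_fy | with_reducible apply Reg.coord | skip
  obtain ⟨h0, h1, h2, h3, h4, h5, h6, h7, h8, h9, h10, h11⟩ := base_vals
  simp only [dA, fy_base, *]; norm_num
theorem reg_fyb : Reg base fyb := by
  unfold fyb
  apply Reg.sA <;> first | exact reg_fy | exact reg_fze | with_reducible apply Reg.coord | skip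
  obtain ⟨h0, h1, h2, h3, h4, h5, h6, h7, h8, h9, h10, h11⟩ := base_vals
  simp only [dA, fy_base, fze_base, *]; norm_num
theorem reg_fzs : Reg base fzs := by
  unfold fzs
  obtain ⟨h0, h1, h2, h3, h4, h5, h6, h7, h8, h9, h10, h11⟩ := base_vals
  apply Reg.sC <;> first | exact reg_fy | with_reducible apply Reg.coord | skip
  · simp only [fy_base, *]; norm_num
  · simp only [*]; norm_num

/-- All nondegeneracy conditions hold near the base point. -/
theorem gen_all : Gen base (fun v =>
    (v 6) ≠ 0 ∧
    (fy v) ≠ 0 ∧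
    (v 11) ≠ 0 ∧
    (fze v) ≠ 0 ∧
    (v 10) ≠ 0 ∧
    (fzs v) ≠ 0 ∧
    dA (v 6) (v 7) (v 10) (v 11) (v 5) (v 1) (v 2) (v 4) ≠ 0 ∧
    dA (v 7) (v 6) (v 10) (v 11) (v 5) (v 2) (v 1) (v 4) ≠ 0 ∧
    dA (v 6) (v 10) (v 7) (fy v) (v 5) (v 1) (v 4) (v 2) ≠ 0 ∧
    dA (v 7) (v 10) (v 6) (fya v) (v 5) (v 2) (v 4) (v 1) ≠ 0 ∧
    dA (v 6) (v 10) (v 8) (fy v) (v 5) (v 1) (v 4) (v 3) ≠ 0 ∧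
    dA (fy v) (v 6) (fze v) (v 10) (v 1) (v 4) (v 5) (v 3) ≠ 0 ∧
    dA (v 6) (fze v) (fy v) (v 8) (v 1) (v 5) (v 3) (v 4) ≠ 0 ∧
    dA (fy v) (fze v) (v 6) (fyb v) (v 1) (v 4) (v 3) (v 5) ≠ 0 ∧
    (v 5)*(v 6)-(v 4)*(fy v) ≠ 0 ∧
    (v 4)*(v 6)-(v 5)*(fy v) ≠ 0 ∧
    (v 5)*(v 6)-(v 2)*(v 11) ≠ 0 ∧
    (v 2)*(v 6)-(v 5)*(v 11) ≠ 0 ∧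
    (v 4)*(fy v)-(v 2)*(v 11) ≠ 0 ∧
    (v 2)*(fy v)-(v 4)*(v 11) ≠ 0 ∧
    (v 5)*(v 6)-(v 3)*(fze v) ≠ 0 ∧
    (v 3)*(v 6)-(v 5)*(fze v) ≠ 0 ∧
    (v 4)*(fy v)-(v 3)*(fze v) ≠ 0 ∧
    (v 3)*(fy v)-(v 4)*(fze v) ≠ 0 ∧
    (v 4)*(v 10)-(v 1)*(v 6) ≠ 0 ∧
    (v 1)*(v 10)-(v 5)*(fy v) ≠ 0 ∧
    (v 4)*(v 6)-(v 1)*(v 10) ≠ 0 ∧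
    (fzs v)*(fy v)*(v 5)-(v 0) ≠ 0) := by
  obtain ⟨h0, h1, h2, h3, h4, h5, h6, h7, h8, h9, h10, h11⟩ := base_vals
  repeat' apply Gen.and
  all_goals
    apply Reg.ne
    · repeat' first
        | with_reducible exact reg_fy | with_reducible exact reg_fya | with_reducible exact reg_fze | with_reducible exact reg_fyb | with_reducible exact reg_fzs
        | with_reducible apply Reg.coord | with_reducible apply Reg.dA | with_reducible apply Reg.sub | with_reducible apply Reg.mul
    · simp only [dA, fy_base, fya_base, fze_base, fyb_base, fzs_base, *]; norm_num

theorem statement11 :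
    ∃ p : MvPolynomial (Fin 12) ℂ, p ≠ 0 ∧
    ∀ a1 a2 b1 b2 g1 g2 x xa xb xc zn zw : ℂ,
      a1 ≠ 0 → a2 ≠ 0 → b1 ≠ 0 → b2 ≠ 0 → g1 ≠ 0 → g2 ≠ 0 →
      MvPolynomial.eval (![a1, a2, b1, b2, g1, g2, x, xa, xb, xc, zn, zw]) p ≠ 0 →
      ∃ xd y ya yb yc yd ze zs : ℂ,
        C3 1 0 0 x xa xb xc xd a1 a2 b1 b2 = 0 ∧
        C3 1 0 0 zw ya xa yc xc a1 a2 g1 g2 = 0 ∧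
        A3 0 zn ya yb xa xb g1 g2 b1 b2 = 0 ∧
        C3 1 0 0 y ya yb yc yd a1 a2 b1 b2 = 0 ∧
        C3 1 0 0 ze yb xb yd xd a1 a2 g1 g2 = 0 ∧
        A3 0 zs yc yd xc xd g1 g2 b1 b2 = 0 ∧
        A3 0 xa zw ya x zn b1 g2 a2 g1 = 0 ∧
        A3 0 xb ze yb x zn b2 g2 a2 g1 = 0 ∧
        C3 1 0 0 xc zs yc x zw a1 g1 b1 g2 = 0 ∧
        C3 1 0 0 xd yd zs ze x a1 g1 g2 b2 = 0 ∧
        A3 0 ya zw xa y zn b1 g1 a2 g2 = 0 ∧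
        A3 0 yb ze xb y zn b2 g1 a2 g2 = 0 ∧
        C3 1 0 0 yc xc zs zw y a1 g2 g1 b1 = 0 ∧
        C3 1 0 0 yd xd zs ze y a1 g2 g1 b2 = 0 := by
  obtain ⟨p, p0, hp⟩ := gen_all
  refine ⟨p, fun h => p0 (by rw [h, map_zero]), ?_⟩
  intro a1 a2 b1 b2 g1 g2 x xa xb xc zn zw _ ha2 hb1 hb2 hg1 hg2 hne
  have H := hp _ hne
  set v : Fin 12 → ℂ := ![a1, a2, b1, b2, g1, g2, x, xa, xb, xc, zn, zw] with hv
  have v0 : v 0 = a1 := rfl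
  have v1 : v 1 = a2 := rfl
  have v2 : v 2 = b1 := rfl
  have v3 : v 3 = b2 := rfl
  have v4 : v 4 = g1 := rfl
  have v5 : v 5 = g2 := rfl
  have v6 : v 6 = x := rfl
  have v7 : v 7 = xa := rfl
  have v8 : v 8 = xb := rfl
  have v9 : v 9 = xc := rfl
  have v10 : v 10 = zn := rfl
  have v11 : v 11 = zw := rfl
  have ey : fy v = sA x xa zn zw g2 a2 b1 g1 := rfl
  have eya : fya v = sA xa x zn zw g2 b1 a2 g1 := rfl
  have eze : fze v = sA x zn xb (fy v) g2 a2 g1 b2 := rfl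
  have eyb : fyb v = sA (fy v) x (fze v) zn a2 g1 g2 b2 := rfl
  have ezs : fzs v = sC x zw (fy v) xc a1 g2 b1 g1 := rfl
  simp only [v0, v1, v2, v3, v4, v5, v6, v7, v8, v9, v10, v11] at H
  generalize fy v = y at *
  generalize fya v = ya at *
  generalize fze v = ze at *
  generalize fyb v = yb at *
  generalize fzs v = zs at *
  obtain ⟨hx, hy, hzw, hze, hzn, hzs, e1, d1, d2, d3, e2, d4, d5, d6, m1, m2, m3, m4, m5, m6, m7, m8, m9, m10, m11, m12, m13, m15⟩ := H
  have t1 : pA x xa zn zw y g2 a2 b1 g1 = 0 := by rw [ey]; exact pA_sA e1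
  have t2 : pA xa x zn zw ya g2 b1 a2 g1 = 0 := by rw [eya]; exact pA_sA d1
  have t3 : pA x y ze zn xb a2 g2 g1 b2 = 0 := by
    have : pA x zn xb y ze g2 a2 g1 b2 = 0 := by rw [eze]; exact pA_sA e2
    exact pA_swap12 this
  have t4 : pA y x ze zn yb a2 g1 g2 b2 = 0 := by rw [eyb]; exact pA_sA d4
  have t5 : pC x y zw zs xc a1 g2 g1 b1 = 0 := by
    rw [ezs]; exact pC_sC hb1 hg1 hx m4 m1
  exact ⟨sC x y ze zs a1 g2 g1 b2, y, ya, yb, sC zw x y xc a1 b1 g2 g1,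
    sC y x ze zs a1 g1 g2 b2, ze, zs,
    core ha2 hb1 hb2 hg1 hg2 hx hy hzw hze hzn hzs t1 t2 t3 t4 t5
      (pC_sC hg2 hg1 hzw (sub_swap_ne m4) (sub_swap_ne m5))
      (pC_sC hg1 hb2 hx m2 m7)
      (pC_sC hg2 hb2 hy (sub_swap_ne m2) m9)
      d1 d2 d3 d4 d5 d6 m1 m2 m3 m4 m5 m6 m7 m8 m9 m10 m11 m12
      m13 (sub_swap_ne m12) m15⟩
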